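/- arXiv:math/0410112 — 2 statements merged into one kernel-verified Lean document; each statement's English description precedes it below -/
import Mathlib

section
/- Let N ≥ 1 and let μ be a nonzero finite Borel measure on ℝ^N such that all moments of μ exist, i.e. every polynomial function is μ-integrable. Fix m ∈ ℕ. Then there exist an integer r with 1 ≤ r ≤ dim_ℝ Pol_m(ℝ^N), points x₁,…,x_r in the support of μ, and weights λ₁,…,λ_r > 0 such that ∫_{ℝ^N} p(y) μ(dy) = Σ_{j=1}^r λ_j p(x_j) for every polynomial p on ℝ^N of total degree at most m. -/
open MeasureTheory

/-- The mean of an integrable function with values in a finite-dimensional space belongs to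
every (not necessarily closed) convex set containing almost all of its values. -/
theorem convex_integral_mem_finiteDim {Ω : Type*} [MeasurableSpace Ω] (μ : Measure Ω)
    [IsProbabilityMeasure μ] (n : ℕ) :
    ∀ (E : Type) [NormedAddCommGroup E] [NormedSpace ℝ E] [FiniteDimensional ℝ E]
      (_ : Module.finrank ℝ E = n) (f : Ω → E) (_ : Integrable f μ) (s : Set E)
      (_ : Convex ℝ s) (_ : ∀ᵐ y ∂μ, f y ∈ s), ∫ y, f y ∂μ ∈ s := by
  induction n using Nat.strong_induction_on with
  | _ n ih =>
  intro E _ _ _ hn f hf s hs hfs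
  have : CompleteSpace E := FiniteDimensional.complete ℝ E
  by_contra hx
  set x := ∫ y, f y ∂μ with hxdef
  have hne : s.Nonempty := by
    obtain ⟨y, hy⟩ := hfs.exists
    exact ⟨_, hy⟩
  -- a nonzero functional which is a.e. constant
  have key : ∃ φ : StrongDual ℝ E, φ ≠ 0 ∧ ∀ᵐ y ∂μ, φ (f y) = φ x := by
    have hint : ∀ φ : StrongDual ℝ E, ∫ y, φ (f y) ∂μ = φ x := fun φ =>
      φ.integral_comp_comm hf
    by_cases hint' : (interior s).Nonempty
    · obtain ⟨φ, hφ, hle⟩ := geometric_hahn_banach_of_nonempty_interior_point hs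
        (fun h => hx (interior_subset h)) hint'
      refine ⟨φ, hφ, ?_⟩
      have h1 : Integrable (fun y => φ (f y)) μ := φ.integrable_comp hf
      have h2 : Integrable (fun y => φ x - φ (f y)) μ := (integrable_const _).sub h1
      have h3 : 0 ≤ᵐ[μ] fun y => φ x - φ (f y) := by
        filter_upwards [hfs] with y hy
        simpa using hle _ hy
      have h4 : ∫ y, (φ x - φ (f y)) ∂μ = 0 := by
        rw [integral_sub (integrable_const _) h1, hint]
        simp
      have h5 := (integral_eq_zero_iff_of_nonneg_ae h3 h2).1 h4
      filter_upwards [h5] with y hy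
      have : φ x - φ (f y) = 0 := hy
      linarith
    · rw [hs.interior_nonempty_iff_affineSpan_eq_top] at hint'
      have hdir : (affineSpan ℝ s).direction ≠ ⊤ := by
        intro h
        apply hint'
        rwa [AffineSubspace.direction_eq_top_iff_of_nonempty] at h
        exact hne.mono (subset_affineSpan ℝ s)
      obtain ⟨φ, hφ, hker⟩ := Submodule.exists_le_ker_of_lt_top _ hdir.lt_top
      obtain ⟨a, ha⟩ := hne
      have hc : ∀ b ∈ s, φ b = φ a := by
        intro b hb
        have := hker (AffineSubspace.vsub_mem_direction (subset_affineSpan ℝ s hb)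
          (subset_affineSpan ℝ s ha))
        simpa [sub_eq_zero] using this
      let ψ : StrongDual ℝ E := LinearMap.toContinuousLinearMap φ
      have hψ : ∀ v, ψ v = φ v := fun v => rfl
      have hae : ∀ᵐ y ∂μ, ψ (f y) = φ a := by
        filter_upwards [hfs] with y hy
        exact hc _ hy
      have hxa : ψ x = φ a := by
        rw [← hint ψ, integral_congr_ae hae]
        simp
      refine ⟨ψ, ?_, ?_⟩
      · intro h
        apply hφ
        ext v
        rw [← hψ, h]
        rfl
      · filter_upwards [hae] with y hy
        rw [hy, hxa]
  obtain ⟨φ, hφ, hae⟩ := key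
  let K : Submodule ℝ E := LinearMap.ker (φ : E →ₗ[ℝ] ℝ)
  have hK : K ≠ ⊤ := by
    intro h
    apply hφ
    ext v
    have : v ∈ K := by rw [h]; trivial
    simpa [K] using this
  obtain ⟨g, hg⟩ := LinearMap.exists_leftInverse_of_injective K.subtype K.ker_subtype
  let G : E →L[ℝ] K := LinearMap.toContinuousLinearMap g
  have hG : ∀ v ∈ K, ((G v : K) : E) = v := by
    intro v hv
    have := LinearMap.congr_fun hg ⟨v, hv⟩
    exact congrArg Subtype.val this
  have hfx : Integrable (fun y => f y - x) μ := hf.sub (integrable_const _)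
  have hmem := ih (Module.finrank ℝ K) (hn ▸ Submodule.finrank_lt hK) K rfl
    (fun y => G (f y - x)) (G.integrable_comp hfx) {k : K | (k : E) + x ∈ s}
    (by
      intro a ha b hb t u ht hu htu
      have := hs ha hb ht hu htu
      change ((t • a + u • b : K) : E) + x ∈ s
      rw [Submodule.coe_add, Submodule.coe_smul, Submodule.coe_smul]
      convert this using 1
      have hx1 : x = (t + u) • x := by rw [htu, one_smul]
      nth_rewrite 1 [hx1]
      module)
    (by
      filter_upwards [hae, hfs] with y hy hys
      have : f y - x ∈ K := by simp [K, hy]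
      change ((G (f y - x) : K) : E) + x ∈ s
      rw [hG _ this]
      simpa using hys)
  rw [G.integral_comp_comm hfx, integral_sub hf (integrable_const _)] at hmem
  apply hx
  simpa [← hxdef] using hmem

/-- **Tchakaloff's theorem.** Let `N ≥ 1` and let `μ` be a nonzero finite
Borel measure on `ℝ^N` all of whose moments exist (every polynomial function is
`μ`-integrable). Fix `m`. Then there are `1 ≤ r ≤ dim_ℝ Pol_m(ℝ^N)`, points
`x₁,…,x_r` in the support of `μ` (every neighborhood of each `x_j` has positive
measure) and weights `λ_j > 0` with `∫ p dμ = ∑_j λ_j p(x_j)` for every polynomial `p`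
of total degree at most `m`. -/
theorem tchakaloff (N : ℕ) (hN : 1 ≤ N) (μ : Measure (Fin N → ℝ)) [IsFiniteMeasure μ]
    (hμ : μ ≠ 0)
    (hmom : ∀ p : MvPolynomial (Fin N) ℝ, Integrable (fun y => MvPolynomial.eval y p) μ)
    (m : ℕ) :
    ∃ r : ℕ, 1 ≤ r ∧
      r ≤ Module.finrank ℝ (MvPolynomial.restrictTotalDegree (Fin N) ℝ m) ∧
      ∃ x : Fin r → (Fin N → ℝ), ∃ lam : Fin r → ℝ,
        (∀ j, 0 < lam j) ∧
        (∀ j, ∀ U : Set (Fin N → ℝ), IsOpen U → x j ∈ U → 0 < μ U) ∧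
        ∀ p : MvPolynomial (Fin N) ℝ, p.totalDegree ≤ m →
          ∫ y, MvPolynomial.eval y p ∂μ = ∑ j, lam j * MvPolynomial.eval (x j) p := by
  classical
  let P := MvPolynomial.restrictTotalDegree (Fin N) ℝ m
  let d := Module.finrank ℝ P
  let b : Module.Basis (Fin d) ℝ P := Module.finBasis ℝ P
  let f : (Fin N → ℝ) → (Fin d → ℝ) := fun y i => MvPolynomial.eval y (b i : MvPolynomial (Fin N) ℝ)
  have hev : ∀ (p : P) (y : Fin N → ℝ),
      MvPolynomial.eval y (p : MvPolynomial (Fin N) ℝ) = ∑ i, b.repr p i * f y i := by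
    intro p y
    conv_lhs => rw [← b.sum_repr p]
    rw [Submodule.coe_sum, map_sum]
    simp only [Submodule.coe_smul, MvPolynomial.smul_eval, f]
  have hfi : ∀ i, Integrable (fun y => f y i) μ := fun i => hmom _
  have hf : Integrable f μ := Integrable.of_eval hfi
  have : NeZero μ := ⟨hμ⟩
  have hmass : (μ Set.univ) ≠ 0 := by simpa using hμ
  have hmass' : (μ Set.univ) ≠ ⊤ := measure_ne_top _ _
  let ν : Measure (Fin N → ℝ) := (μ Set.univ)⁻¹ • μ
  have : IsProbabilityMeasure ν := by
    constructor
    simp [ν, ENNReal.inv_mul_cancel hmass hmass']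
  have hsupp : ∀ᵐ y ∂ν, f y ∈ convexHull ℝ (f '' μ.support) := by
    apply Measure.ae_smul_measure
    filter_upwards [Measure.support_mem_ae (μ := μ)] with y hy
    exact subset_convexHull ℝ _ ⟨y, hy, rfl⟩
  have hmem := convex_integral_mem_finiteDim ν d (Fin d → ℝ) (by simp) f
    (hf.smul_measure (by simpa using hmass)) _ (convex_convexHull ℝ _) hsupp
  obtain ⟨ι, _, z, w, hz, hind, hw, hw1, hwz⟩ := eq_pos_convex_span_of_mem_convexHull hmem
  have hzx : ∀ i, ∃ y ∈ μ.support, f y = z i := fun i => hz ⟨i, rfl⟩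
  choose X hXs hX using hzx
  let one : P := ⟨1, by rw [MvPolynomial.mem_restrictTotalDegree]; simp⟩
  have hone : ∀ i, ∑ k, b.repr one k * z i k = 1 := by
    intro i
    rw [← hX, ← hev]
    simp [one]
  have hlin : LinearIndependent ℝ z := by
    rw [Fintype.linearIndependent_iff]
    intro g hg i
    refine affineIndependent_iff.1 hind Finset.univ g ?_ hg i (Finset.mem_univ _)
    calc ∑ i, g i = ∑ i, g i * ∑ k, b.repr one k * z i k := by simp [hone]
      _ = ∑ k, b.repr one k * (∑ i, g i • z i) k := by
        simp only [Finset.mul_sum, Finset.sum_apply, Pi.smul_apply, smul_eq_mul]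
        rw [Finset.sum_comm]
        refine Finset.sum_congr rfl fun k _ => Finset.sum_congr rfl fun i _ => by ring
      _ = 0 := by rw [hg]; simp
  have hcard : Fintype.card ι ≤ d := by
    simpa using hlin.fintype_card_le_finrank
  have hpos : 1 ≤ Fintype.card ι := by
    rw [Nat.one_le_iff_ne_zero]
    intro h
    have := Fintype.card_eq_zero_iff.1 h
    simp at hw1
  let c : ℝ := (μ Set.univ).toReal
  have hc : 0 < c := ENNReal.toReal_pos hmass hmass'
  let e := (Fintype.equivFin ι).symm
  refine ⟨Fintype.card ι, hpos, hcard, fun j => X (e j), fun j => c * w (e j),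
    fun j => mul_pos hc (hw _), ?_, ?_⟩
  · intro j U hU hxU
    exact (Measure.mem_support_iff_forall _).1 (hXs (e j)) U (hU.mem_nhds hxU)
  · intro p hp
    have hp' : p ∈ P := (MvPolynomial.mem_restrictTotalDegree _ _ _).2 hp
    have hcoord : ∀ k, ∫ y, f y k ∂μ = c * ∑ i, w i * f (X i) k := by
      intro k
      have h1 := congrFun hwz k
      rw [integral_smul_measure] at h1
      simp only [Finset.sum_apply, Pi.smul_apply, smul_eq_mul, ENNReal.toReal_inv] at h1
      rw [eval_integral hfi] at h1
      have h2 : ∑ i, w i * f (X i) k = c⁻¹ * ∫ y, f y k ∂μ := by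
        rw [← h1]
        exact Finset.sum_congr rfl fun i _ => by rw [hX]
      rw [h2, mul_inv_cancel_left₀ hc.ne']
    have hpe : ∀ y, MvPolynomial.eval y p = ∑ i, b.repr ⟨p, hp'⟩ i * f y i := fun y =>
      hev ⟨p, hp'⟩ y
    rw [Equiv.sum_comp e (fun i => c * w i * MvPolynomial.eval (X i) p)]
    simp only [hpe]
    rw [integral_finsetSum _ fun i _ => (hfi i).const_mul _]
    simp only [integral_const_mul, hcoord, Finset.mul_sum]
    rw [Finset.sum_comm]
    refine Finset.sum_congr rfl fun i _ => Finset.sum_congr rfl fun k _ => by ring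
end

section
/- Taylor expansion of solutions of non-autonomous ODEs driven by smooth paths: let V₀,…,V_d : ℝ^N → ℝ^N be C^∞-bounded vector fields, let ω = (ω⁰,…,ω^d) : [0,T] → ℝ^{d+1} be a C¹ path, let y ∈ ℝ^N, and let Z : [0,T] → ℝ^N be the (unique, globally defined) solution of Z'(t) = Σ_{i=0}^d V_i(Z(t))·(ωⁱ)'(t) with Z(0) = y. Then for every f ∈ C_b^∞(ℝ^N), every n ≥ 0 and every t ∈ [0,T]: f(Z(t)) = Σ_{I : deg(I) ≤ n} (V_{i₁}⋯V_{i_k} f)(y) · ∫_{0≤t₁≤⋯≤t_k≤t} (ω^{i₁})'(t₁)⋯(ω^{i_k})'(t_k) dt₁⋯dt_k + R_n(t,f), where the sum runs over all words I = (i₁,…,i_k) with deg(I) ≤ n (the empty word contributing f(y)), and R_n(t,f) = Σ ∫_{0≤t₀≤t₁≤⋯≤t_k≤t} (V_{i₀}V_{i₁}⋯V_{i_k} f)(Z(t₀)) · (ω^{i₀})'(t₀)⋯(ω^{i_k})'(t_k) dt₀⋯dt_k, the last sum running over all words (i₀,i₁,…,i_k) with deg(i₁,…,i_k) ≤ n and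 deg(i₀,i₁,…,i_k) > n. -/
open MeasureTheory

noncomputable section

/-- The degree of a letter in `{0,…,d}`: the letter `0` counts twice. -/
def letterDeg (d : ℕ) (i : Fin (d + 1)) : ℕ := if i = 0 then 2 else 1

/-- The degree `deg(I)` of a word `I = (i₁,…,i_k)`. -/
def wordDeg (d : ℕ) (I : List (Fin (d + 1))) : ℕ := (I.map (letterDeg d)).sum

/-- The action of a word of vector fields on a function:
`vfAct V (i₁,…,i_k) f = V_{i₁} ⋯ V_{i_k} f`, where a vector field `V` acts as the
first-order differential operator `(V f)(x) = df(x)·V(x)`. -/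
def vfAct (N d : ℕ) (V : Fin (d + 1) → (Fin N → ℝ) → (Fin N → ℝ)) :
    List (Fin (d + 1)) → ((Fin N → ℝ) → ℝ) → ((Fin N → ℝ) → ℝ)
  | [], f => f
  | i :: rest, f => fun x => fderiv ℝ (vfAct N d V rest f) x (V i x)

/-- The iterated integral `∫_{0≤t₁≤⋯≤t_k≤s} g(t₁)·ω^{j₁}'(t₁)⋯ω^{j_k}'(t_k) dt₁⋯dt_k`
with an extra integrand `g` of the innermost variable; the word is given with the
**outermost** integration variable first (i.e. for a word `I = (i₁,…,i_k)` one applies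
this to `I.reverse`). -/
def itIntF (d : ℕ) (ω : Fin (d + 1) → ℝ → ℝ) (g : ℝ → ℝ) :
    List (Fin (d + 1)) → ℝ → ℝ
  | [], s => g s
  | i :: rest, s => ∫ u in (0 : ℝ)..s, deriv (ω i) u * itIntF d ω g rest u

theorem te_append (d : ℕ) (ω : Fin (d + 1) → ℝ → ℝ) (g : ℝ → ℝ) (i : Fin (d + 1))
    (L : List (Fin (d + 1))) :
    itIntF d ω g (L ++ [i]) = itIntF d ω (fun s => ∫ u in (0 : ℝ)..s, deriv (ω i) u * g u) L := by
  induction L with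
  | nil => funext s; simp [itIntF]
  | cons j L ih => funext s; simp only [List.cons_append, itIntF, ih]

theorem te_integral_cont (T : ℝ) (hT : 0 < T) (h : ℝ → ℝ) (hh : ContinuousOn h (Set.Icc 0 T)) :
    ContinuousOn (fun s => ∫ u in (0 : ℝ)..s, h u) (Set.Icc 0 T) := by
  have := intervalIntegral.continuousOn_primitive_interval (μ := volume) (f := h) (a := 0) (b := T)
    (by rw [Set.uIcc_of_le hT.le]; exact hh.integrableOn_Icc)
  rwa [Set.uIcc_of_le hT.le] at this

theorem te_cont (d : ℕ) (ω : Fin (d + 1) → ℝ → ℝ) (hω : ∀ i, ContDiff ℝ 1 (ω i))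
    (T : ℝ) (hT : 0 < T) (g : ℝ → ℝ) (hg : ContinuousOn g (Set.Icc 0 T))
    (L : List (Fin (d + 1))) : ContinuousOn (itIntF d ω g L) (Set.Icc 0 T) := by
  induction L with
  | nil => exact hg
  | cons j L ih =>
    exact te_integral_cont T hT _ (((hω j).continuous_deriv le_rfl).continuousOn.mul ih)

theorem te_ii (T t : ℝ) (ht : t ∈ Set.Icc (0 : ℝ) T) (h : ℝ → ℝ)
    (hh : ContinuousOn h (Set.Icc 0 T)) : IntervalIntegrable h volume 0 t := by
  apply ContinuousOn.intervalIntegrable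
  rw [Set.uIcc_of_le ht.1]
  exact hh.mono (Set.Icc_subset_Icc_right ht.2)

theorem te_lin (d : ℕ) (ω : Fin (d + 1) → ℝ → ℝ) (hω : ∀ i, ContDiff ℝ 1 (ω i))
    (T : ℝ) (hT : 0 < T) (g : ℝ → ℝ) (c : ℝ) (h : Fin (d + 1) → ℝ → ℝ)
    (hh : ∀ i, ContinuousOn (h i) (Set.Icc 0 T))
    (hg : ∀ s ∈ Set.Icc (0 : ℝ) T, g s = c + ∑ i, h i s)
    (L : List (Fin (d + 1))) : ∀ s ∈ Set.Icc (0 : ℝ) T,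
      itIntF d ω g L s = c * itIntF d ω (fun _ => 1) L s + ∑ i, itIntF d ω (h i) L s := by
  induction L with
  | nil => intro s hs; simp [itIntF, hg s hs]
  | cons j L ih =>
    intro s hs
    have hdj := ((hω j).continuous_deriv le_rfl).continuousOn (s := Set.Icc 0 T)
    have c1 : ContinuousOn (fun u => deriv (ω j) u * itIntF d ω (fun _ => 1) L u) (Set.Icc 0 T) :=
      hdj.mul (te_cont d ω hω T hT (fun _ => 1) continuousOn_const L)
    have c2 : ∀ i, ContinuousOn (fun u => deriv (ω j) u * itIntF d ω (h i) L u) (Set.Icc 0 T) :=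
      fun i => hdj.mul (te_cont d ω hω T hT (h i) (hh i) L)
    simp only [itIntF]
    rw [← intervalIntegral.integral_const_mul,
      ← intervalIntegral.integral_finsetSum (fun i _ => te_ii T s hs _ (c2 i)),
      ← intervalIntegral.integral_add ((te_ii T s hs _ c1).const_mul c)
        (te_ii T s hs _ (continuousOn_finsetSum _ fun i _ => c2 i))]
    apply intervalIntegral.integral_congr
    intro u hu
    rw [Set.uIcc_of_le hs.1] at hu
    simp only []
    rw [ih u ⟨hu.1, hu.2.trans hs.2⟩, mul_add, Finset.mul_sum]
    ring

theorem te_smooth (N d : ℕ) (V : Fin (d + 1) → (Fin N → ℝ) → (Fin N → ℝ))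
    (hV : ∀ i, ContDiff ℝ (⊤ : ℕ∞) (V i)) (f : (Fin N → ℝ) → ℝ)
    (hf : ContDiff ℝ (⊤ : ℕ∞) f) (L : List (Fin (d + 1))) :
    ContDiff ℝ (⊤ : ℕ∞) (vfAct N d V L f) := by
  induction L with
  | nil => exact hf
  | cons i L ih =>
    exact (ih.fderiv_right (m := (⊤ : ℕ∞)) (by simp)).clm_apply (hV i)

theorem te_len (d : ℕ) (L : List (Fin (d + 1))) : L.length ≤ wordDeg d L := by
  induction L with
  | nil => simp
  | cons i L ih =>
    have : 1 ≤ letterDeg d i := by unfold letterDeg; split <;> omega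
    simp only [wordDeg, List.map_cons, List.sum_cons, List.length_cons] at *
    omega

theorem te_step (N d : ℕ) (T : ℝ) (hT : 0 < T)
    (V : Fin (d + 1) → (Fin N → ℝ) → (Fin N → ℝ))
    (hV : ∀ i, ContDiff ℝ (⊤ : ℕ∞) (V i))
    (ω : Fin (d + 1) → ℝ → ℝ) (hω : ∀ i, ContDiff ℝ 1 (ω i))
    (y : Fin N → ℝ) (Z : ℝ → Fin N → ℝ) (hZ0 : Z 0 = y)
    (hZ : ∀ s ∈ Set.Icc (0 : ℝ) T,
      HasDerivAt Z (∑ i : Fin (d + 1), deriv (ω i) s • V i (Z s)) s)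
    (f : (Fin N → ℝ) → ℝ) (hf : ContDiff ℝ (⊤ : ℕ∞) f)
    (w : List (Fin (d + 1))) (t : ℝ) (ht : t ∈ Set.Icc (0 : ℝ) T) :
    itIntF d ω (fun u => vfAct N d V w f (Z u)) w.reverse t =
      vfAct N d V w f y * itIntF d ω (fun _ => 1) w.reverse t +
      ∑ i, itIntF d ω (fun u => vfAct N d V (i :: w) f (Z u)) (i :: w).reverse t := by
  have hZc : ContinuousOn Z (Set.Icc 0 T) := fun s hs => (hZ s hs).continuousAt.continuousWithinAt
  have hc : ∀ i, ContinuousOn (fun u => deriv (ω i) u * vfAct N d V (i :: w) f (Z u))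
      (Set.Icc 0 T) := fun i =>
    ((hω i).continuous_deriv le_rfl).continuousOn.mul
      ((te_smooth N d V hV f hf (i :: w)).continuous.comp_continuousOn hZc)
  simp only [List.reverse_cons, te_append]
  apply te_lin d ω hω T hT _ _ _ (fun i => te_integral_cont T hT _ (hc i)) _ _ t ht
  intro s hs
  rw [← intervalIntegral.integral_finsetSum (fun i _ => te_ii T s hs _ (hc i))]
  have key := intervalIntegral.integral_eq_sub_of_hasDerivAt (a := 0) (b := s)
    (f := fun u => vfAct N d V w f (Z u))
    (f' := fun u => ∑ i, deriv (ω i) u * vfAct N d V (i :: w) f (Z u))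
    (fun u hu => by
      rw [Set.uIcc_of_le hs.1] at hu
      have h1 := (((te_smooth N d V hV f hf w).differentiable (by simp)) (Z u)).hasFDerivAt
      have h2 := h1.comp_hasDerivAt u (hZ u ⟨hu.1, hu.2.trans hs.2⟩)
      simpa [map_sum, vfAct, Function.comp_def] using h2)
    (te_ii T s hs _ (continuousOn_finsetSum _ fun i _ => hc i))
  rw [key, hZ0]
  ring

theorem te_comb (d n : ℕ) (A C : List (Fin (d + 1)) → ℝ)
    (h : ∀ w, A w = C w + ∑ i, A (i :: w)) (m : ℕ) :
    A [] = (∑ k ∈ Finset.range m, ∑ v : Fin k → Fin (d + 1),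
          if wordDeg d (List.ofFn v) ≤ n then C (List.ofFn v) else 0) +
        (∑ k ∈ Finset.range m, ∑ v : Fin k → Fin (d + 1), ∑ i₀ : Fin (d + 1),
          if wordDeg d (List.ofFn v) ≤ n ∧ n < wordDeg d (i₀ :: List.ofFn v) then
            A (i₀ :: List.ofFn v) else 0) +
        ∑ v : Fin m → Fin (d + 1),
          if wordDeg d (List.ofFn v) ≤ n then A (List.ofFn v) else 0 := by
  induction m with
  | zero => simp [wordDeg]
  | succ m ih =>
    rw [ih, Finset.sum_range_succ, Finset.sum_range_succ]
    have e : (∑ v : Fin m → Fin (d + 1),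
          if wordDeg d (List.ofFn v) ≤ n then A (List.ofFn v) else 0) =
        (∑ v : Fin m → Fin (d + 1),
          if wordDeg d (List.ofFn v) ≤ n then C (List.ofFn v) else 0) +
        (∑ v : Fin m → Fin (d + 1), ∑ i₀ : Fin (d + 1),
          if wordDeg d (List.ofFn v) ≤ n ∧ n < wordDeg d (i₀ :: List.ofFn v) then
            A (i₀ :: List.ofFn v) else 0) +
        ∑ v : Fin (m + 1) → Fin (d + 1),
          if wordDeg d (List.ofFn v) ≤ n then A (List.ofFn v) else 0 := by
      rw [← (Fin.consEquiv (fun _ => Fin (d + 1))).sum_comp, Fintype.sum_prod_type_right,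
        ← Finset.sum_add_distrib, ← Finset.sum_add_distrib]
      refine Finset.sum_congr rfl fun v _ => ?_
      rw [add_assoc, ← Finset.sum_add_distrib]
      have hw : ∀ i : Fin (d + 1), wordDeg d (List.ofFn v) ≤ wordDeg d (i :: List.ofFn v) := by
        intro i; simp [wordDeg]
      by_cases hv : wordDeg d (List.ofFn v) ≤ n
      · rw [if_pos hv, if_pos hv, h]
        congr 1
        refine Finset.sum_congr rfl fun i _ => ?_
        by_cases hi : n < wordDeg d (i :: List.ofFn v)
        · simp [Fin.consEquiv, List.ofFn_succ, hv, hi]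
        · simp [Fin.consEquiv, List.ofFn_succ, hi, not_lt.mp hi]
      · rw [if_neg hv, if_neg hv, zero_add]
        symm
        refine Finset.sum_eq_zero fun i _ => ?_
        have hi := lt_of_lt_of_le (not_le.mp hv) (hw i)
        simp [Fin.consEquiv, List.ofFn_succ, hv, hi]
    rw [e]
    ring

/-- Taylor expansion of solutions of non-autonomous ODEs driven by
smooth paths: for `C^∞`-bounded vector fields `V₀,…,V_d`, a `C¹` path `ω`, and the
solution `Z` of `Z'(t) = ∑ V_i(Z(t))·ωⁱ'(t)`, `Z(0) = y`, every `f ∈ C_b^∞` satisfies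
`f(Z(t)) = ∑_{deg(I) ≤ n} (V_{i₁}⋯V_{i_k} f)(y)·∫_{simplex} ω^{i₁}'⋯ω^{i_k}' + R_n(t,f)`
with the explicit remainder `R_n(t,f)` summed over words `(i₀,i₁,…,i_k)` with
`deg(i₁,…,i_k) ≤ n < deg(i₀,i₁,…,i_k)`. -/
theorem taylor_expansion_ODE (N d : ℕ) (hN : 1 ≤ N) (hd : 1 ≤ d) (T : ℝ) (hT : 0 < T)
    (V : Fin (d + 1) → (Fin N → ℝ) → (Fin N → ℝ))
    (hV : ∀ i, ContDiff ℝ (⊤ : ℕ∞) (V i))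
    (hVb : ∀ i, ∀ k : ℕ, 1 ≤ k → ∃ C : ℝ, ∀ x, ‖iteratedFDeriv ℝ k (V i) x‖ ≤ C)
    (ω : Fin (d + 1) → ℝ → ℝ) (hω : ∀ i, ContDiff ℝ 1 (ω i))
    (y : Fin N → ℝ) (Z : ℝ → Fin N → ℝ) (hZ0 : Z 0 = y)
    (hZ : ∀ s ∈ Set.Icc (0 : ℝ) T,
      HasDerivAt Z (∑ i : Fin (d + 1), deriv (ω i) s • V i (Z s)) s)
    (f : (Fin N → ℝ) → ℝ) (hf : ContDiff ℝ (⊤ : ℕ∞) f)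
    (hfb : ∀ k : ℕ, ∃ C : ℝ, ∀ x, ‖iteratedFDeriv ℝ k f x‖ ≤ C)
    (n : ℕ) :
    ∀ t ∈ Set.Icc (0 : ℝ) T,
      f (Z t) =
        (∑ k ∈ Finset.range (n + 1), ∑ v : Fin k → Fin (d + 1),
          if wordDeg d (List.ofFn v) ≤ n then
            vfAct N d V (List.ofFn v) f y *
              itIntF d ω (fun _ => 1) (List.ofFn v).reverse t
          else 0) +
        (∑ k ∈ Finset.range (n + 1), ∑ v : Fin k → Fin (d + 1), ∑ i₀ : Fin (d + 1),
          if wordDeg d (List.ofFn v) ≤ n ∧ n < wordDeg d (i₀ :: List.ofFn v) then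
            itIntF d ω (fun u => vfAct N d V (i₀ :: List.ofFn v) f (Z u))
              (i₀ :: List.ofFn v).reverse t
          else 0) := by
  intro t ht
  have hh := te_comb d n
    (fun w => itIntF d ω (fun u => vfAct N d V w f (Z u)) w.reverse t)
    (fun w => vfAct N d V w f y * itIntF d ω (fun _ => 1) w.reverse t)
    (fun w => te_step N d T hT V hV ω hω y Z hZ0 hZ f hf w t ht) (n + 1)
  have h0 : (∑ v : Fin (n + 1) → Fin (d + 1), if wordDeg d (List.ofFn v) ≤ n then
      itIntF d ω (fun u => vfAct N d V (List.ofFn v) f (Z u)) (List.ofFn v).reverse t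
      else 0) = 0 := by
    refine Finset.sum_eq_zero fun v _ => if_neg ?_
    have := te_len d (List.ofFn v)
    rw [List.length_ofFn] at this
    omega
  simp only [h0, add_zero] at hh
  exact hh

end
end
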